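/- arXiv:1210.6459 — 2 statements merged into one kernel-verified Lean document; each statement's English description precedes it below -/
import Mathlib

section
/- Let C be a completely regular code in F_2^n with |C| > 1 and minimum distance δ satisfying δ > max(2, n/2). Then either δ = n and C is equivalent (under the automorphism group of the Hamming graph, i.e., a translation by a vector of F_2^n composed with a permutation of the n coordinates) to the binary repetition code {0, 1}; or (n, δ) = (7, 4) and C is equivalent to the code 𝓗_E of length 7, where 𝓗_E is the F_2-linear span in F_2^7 of the three vectors r1 = (1,0,0,1,0,1,1), r2 = (0,1,0,1,1,1,0), r3 = (0,0,1,0,1,1,1). -/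
/-! Words are replaced by `±1`-vectors through the character `sgn`, so that the inner product satisfies
`ip x y = n - 2 * hammingDist x y`. If `α` is a codeword and `|S| ≤ δ / 2`, the word `α + 1_S` is at
distance exactly `|S|` from the code. Complete regularity therefore says that the power sums over
`β ∈ C` of `ip (α + 1_S) β` depend only on `|S|` (`moments`). Expanding the first three powers gives
orthogonality relations between the columns of the code.

* `|S| = 1`, first power: every column is balanced (`col_sum`).
* `|S| = 2`, second power, `δ ≥ 4`: either any two columns are orthogonal or all codewords are
  antipodal, the latter giving `δ = n` (`pair_sum`).
* When the columns are orthogonal, fix `α ∈ C` and put `P = ip α β`. Then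
  `∑ (P - n) (P + 1) = 0`, and all terms are nonnegative because `δ > n / 2` gives `P ≤ -1`
  for `β ≠ α`. So the code is equidistant, `n = 2 δ - 1` and `|C| = n + 1` (`equidistant`).
  Orthogonality also gives `4 ∣ |C|`, so `δ` is even (`four_dvd`).
* `|S| = 3`, third power, `δ ≥ 6`: products of three columns are balanced as well, so
  `∑ P ^ 3 = 0`. But this sum is `n ^ 3 - n`, a contradiction (`not_six_le`).

There remain `δ = 4`, `n = 7`, where the eight words are determined up to equivalence
(`equiv_simplex`), and `δ = 3` with `n ∈ {4, 5}`, excluded by small counting arguments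
(`not_len_four`, `not_len_five`).
-/

/-- Vertices of the binary Hamming graph of length `n`, identified with `F_2^n`. -/
abbrev V (n : ℕ) := Fin n → ZMod 2

/-- Distance of a vertex `α` from a code `C`: `d(α,C) = min_{β ∈ C} d(α,β)`. -/
noncomputable def distTo {n : ℕ} (C : Set (V n)) (α : V n) : ℕ :=
  sInf (hammingDist α '' C)

/-- Covering radius of a code: the maximum over all vertices of the distance to the code. -/
noncomputable def coveringRadius {n : ℕ} (C : Set (V n)) : ℕ :=
  sSup (Set.range (distTo C))

/-- A code `C` is completely regular if for every `i` and `k`, the number of codewords at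
Hamming distance `k` from a vertex `ν` with `d(ν,C) = i` depends only on `i` and `k`. -/
def CompletelyRegular {n : ℕ} (C : Set (V n)) : Prop :=
  ∀ (i k : ℕ) (ν μ : V n), distTo C ν = i → distTo C μ = i →
    {β ∈ C | hammingDist ν β = k}.ncard = {β ∈ C | hammingDist μ β = k}.ncard

/-- `δ` is the minimum distance of `C`: the least Hamming distance between distinct codewords. -/
def IsMinDist {n : ℕ} (C : Set (V n)) (δ : ℕ) : Prop :=
  (∀ α ∈ C, ∀ β ∈ C, α ≠ β → δ ≤ hammingDist α β) ∧
  (∃ α ∈ C, ∃ β ∈ C, α ≠ β ∧ hammingDist α β = δ)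

def r1 : V 7 := ![1,0,0,1,0,1,1]
def r2 : V 7 := ![0,1,0,1,1,1,0]
def r3 : V 7 := ![0,0,1,0,1,1,1]

/-- The standard bilinear form over `F_2`. -/
def bform {n : ℕ} (x y : V n) : ZMod 2 := ∑ i, x i * y i

/-- The `[7,4,3]` Hamming code: vectors orthogonal to `r1`, `r2`, `r3`. -/
def Ham : Set (V 7) := {x | bform r1 x = 0 ∧ bform r2 x = 0 ∧ bform r3 x = 0}

/-- `𝓗(k)`: the set of codewords of the Hamming code of weight `k`. -/
def HamW (k : ℕ) : Set (V 7) := {x ∈ Ham | hammingNorm x = k}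

/-- Two codes are equivalent if some automorphism of the Hamming graph (a translation
composed with a coordinate permutation) maps one to the other. -/
def CodeEquiv {n : ℕ} (C D : Set (V n)) : Prop :=
  ∃ (v : V n) (σ : Equiv.Perm (Fin n)), (fun x : V n => v + x ∘ σ) '' C = D

/-! ### Signs and complete regularity -/

/-- The additive character `F_2 → {1, -1} ⊆ ℤ`. -/
def sgn (a : ZMod 2) : ℤ := if a = 0 then 1 else -1

/-- The inner product of the `±1`-vectors attached to two binary words. -/
def ip {n : ℕ} (x y : V n) : ℤ := ∑ i, sgn (x i) * sgn (y i)

/-- The word obtained from `x` by flipping the coordinates in `S`. -/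
def flipOn {n : ℕ} (x : V n) (S : Finset (Fin n)) : V n :=
  fun i => if i ∈ S then x i + 1 else x i

lemma sgn_eq (a : ZMod 2) : sgn a = 1 ∨ sgn a = -1 := by
  revert a; decide

lemma sgn_sq (a : ZMod 2) : sgn a * sgn a = 1 := by
  revert a; decide

lemma sgn_add_one (a : ZMod 2) : sgn (a + 1) = -sgn a := by
  revert a; decide

lemma sgn_mul (a b : ZMod 2) : sgn a * sgn b = 1 - 2 * (if a ≠ b then 1 else 0) := by
  revert a b; decide

lemma sgn_ne {a b : ZMod 2} (h : a ≠ b) : sgn b = -sgn a := by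
  revert a b; decide

lemma ip_eq {n : ℕ} (x y : V n) : ip x y = n - 2 * (hammingDist x y : ℤ) := by
  simp only [ip, sgn_mul, Finset.sum_sub_distrib, ← Finset.mul_sum, hammingDist,
    Finset.sum_boole]
  simp

lemma ip_self {n : ℕ} (x : V n) : ip x x = n := by simp [ip_eq]

lemma ip_comm {n : ℕ} (x y : V n) : ip x y = ip y x := by simp [ip_eq, hammingDist_comm]

lemma hammingDist_flipOn {n : ℕ} (x : V n) (S : Finset (Fin n)) :
    hammingDist (flipOn x S) x = S.card := by
  unfold hammingDist flipOn
  congr 1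
  ext i
  by_cases h : i ∈ S <;> simp [h]

lemma ip_flipOn {n : ℕ} (x y : V n) (S : Finset (Fin n)) :
    ip (flipOn x S) y = ip x y - 2 * ∑ i ∈ S, sgn (x i) * sgn (y i) := by
  have h : ∑ i ∈ S, sgn (x i) * sgn (y i)
      = ∑ i, if i ∈ S then sgn (x i) * sgn (y i) else 0 := by simp
  rw [h, ip, ip, Finset.mul_sum, ← Finset.sum_sub_distrib]
  refine Finset.sum_congr rfl fun i _ => ?_
  by_cases hi : i ∈ S
  · simp only [flipOn, hi, if_true, sgn_add_one]; ring
  · simp [flipOn, hi]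

/-- By the triangle inequality, a vertex at distance `t ≤ δ / 2` from some codeword is at
distance exactly `t` from the code. -/
lemma distTo_eq {n δ t : ℕ} {C : Set (V n)}
    (hmin : ∀ α ∈ C, ∀ β ∈ C, α ≠ β → δ ≤ hammingDist α β) {α ν : V n} (hα : α ∈ C)
    (hν : hammingDist ν α = t) (ht : 2 * t ≤ δ) : distTo C ν = t := by
  refine le_antisymm (Nat.sInf_le ⟨α, hα, hν⟩) (le_csInf ⟨_, α, hα, rfl⟩ ?_)
  rintro _ ⟨β, hβ, rfl⟩
  by_cases h : α = β
  · subst h; exact hν.ge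
  · have h1 := hmin α hα β hβ h
    have h2 := hammingDist_triangle_left α β ν
    omega

/-- In a completely regular code, any function of the distances from `ν` to the codewords
has a total that depends only on the distance of `ν` to the code. -/
lemma sum_dist_eq {n : ℕ} {F : Finset (V n)} (hcr : CompletelyRegular (F : Set (V n)))
    {ν μ : V n} (h : distTo (F : Set (V n)) ν = distTo (F : Set (V n)) μ) (g : ℕ → ℤ) :
    ∑ β ∈ F, g (hammingDist ν β) = ∑ β ∈ F, g (hammingDist μ β) := by
  have key : ∀ x : V n, ∑ β ∈ F, g (hammingDist x β) = ∑ k ∈ Finset.range (n + 1),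
      ({β ∈ (F : Set (V n)) | hammingDist x β = k}.ncard : ℤ) * g k := by
    intro x
    rw [← Finset.sum_fiberwise_of_maps_to (s := F) (t := Finset.range (n + 1))
      (g := fun β => hammingDist x β)]
    · refine Finset.sum_congr rfl fun k _ => ?_
      have : {β ∈ (F : Set (V n)) | hammingDist x β = k}
          = ((F.filter fun β => hammingDist x β = k : Finset (V n)) : Set (V n)) := by
        ext; simp
      rw [this, Set.ncard_coe_finset, ← nsmul_eq_mul]
      refine Finset.sum_eq_card_nsmul fun β hβ => ?_
      rw [(Finset.mem_filter.1 hβ).2]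
    · intro β _
      have := hammingDist_le_card_fintype (x := x) (y := β)
      simp only [Fintype.card_fin] at this
      simpa [Nat.lt_succ_iff] using this
  rw [key, key]
  refine Finset.sum_congr rfl fun k _ => ?_
  rw [hcr _ k ν μ h rfl]

/-! ### Moments and orthogonality of the columns -/

/-- Power sums of the inner products with the word obtained from a codeword `α` by flipping the
coordinates in `S` depend only on `|S|`, as long as `|S| ≤ δ / 2`. -/
def Moments {n : ℕ} (F : Finset (V n)) (δ : ℕ) : Prop :=
  ∀ m : ℕ, ∀ α ∈ F, ∀ α' ∈ F, ∀ S S' : Finset (Fin n), S.card = S'.card → 2 * S.card ≤ δ →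
    ∑ β ∈ F, (ip α β - 2 * ∑ i ∈ S, sgn (α i) * sgn (β i)) ^ m =
    ∑ β ∈ F, (ip α' β - 2 * ∑ i ∈ S', sgn (α' i) * sgn (β i)) ^ m

lemma moments {n δ : ℕ} {F : Finset (V n)} (hcr : CompletelyRegular (F : Set (V n)))
    (hmin : ∀ α ∈ F, ∀ β ∈ F, α ≠ β → δ ≤ hammingDist α β) : Moments F δ := by
  intro m α hα α' hα' S S' hS hδ
  simp only [← ip_flipOn]
  simp only [ip_eq]
  have h1 : distTo (F : Set (V n)) (flipOn α S) = S.card :=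
    distTo_eq (by simpa using hmin) (by simpa using hα) (hammingDist_flipOn _ _) hδ
  have h2 : distTo (F : Set (V n)) (flipOn α' S') = S.card :=
    distTo_eq (by simpa using hmin) (by simpa using hα') ((hammingDist_flipOn _ _).trans hS.symm) hδ
  exact sum_dist_eq hcr (h1.trans h2.symm) fun k => ((n : ℤ) - 2 * (k : ℤ)) ^ m

/-- Every column of the code is balanced. -/
lemma col_sum {n δ : ℕ} {F : Finset (V n)} (hM : Moments F δ) (hδ : 2 ≤ δ)
    (hc : 1 < F.card) (i : Fin n) : ∑ β ∈ F, sgn (β i) = 0 := by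
  have key : ∀ α ∈ F, ∀ α' ∈ F, ∀ i j : Fin n,
      sgn (α i) * ∑ β ∈ F, sgn (β i) = sgn (α' j) * ∑ β ∈ F, sgn (β j) := by
    intro α hα α' hα' i j
    have h0 := hM 1 α hα α' hα' ∅ ∅ rfl (by simp)
    have h1 := hM 1 α hα α' hα' {i} {j} rfl (by simpa using hδ)
    simp only [Finset.sum_empty, Finset.sum_singleton, pow_one, Finset.sum_sub_distrib,
      ← Finset.mul_sum, mul_zero, sub_zero] at h0 h1
    linarith
  obtain ⟨α, hα, γ, hγ, hne⟩ := Finset.one_lt_card.1 hc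
  obtain ⟨j, hj⟩ := Function.ne_iff.1 hne
  have h1 := key α hα γ hγ j j
  have h2 := key α hα α hα i j
  rw [sgn_ne hj] at h1
  have h3 : sgn (α i) * ∑ β ∈ F, sgn (β i) = 0 := by linarith
  rcases sgn_eq (α i) with h | h <;> rw [h] at h3 <;> linarith

lemma sum_ip {n : ℕ} {F : Finset (V n)} (hS : ∀ i, ∑ β ∈ F, sgn (β i) = 0) (α : V n) :
    ∑ β ∈ F, ip α β = 0 := by
  simp only [ip]
  rw [Finset.sum_comm]
  simp [← Finset.mul_sum, hS]

lemma sgn_mul_sq (a b : ZMod 2) : (sgn a * sgn b) ^ 2 = 1 := by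
  revert a b; decide

/-- The correlation of the `i`-th column with the inner products does not depend on `i`. -/
lemma sum_ip_mul {n δ : ℕ} {F : Finset (V n)} (hM : Moments F δ) (hδ : 2 ≤ δ)
    {α α' : V n} (hα : α ∈ F) (hα' : α' ∈ F) (i j : Fin n) :
    ∑ β ∈ F, ip α β * (sgn (α i) * sgn (β i)) =
    ∑ β ∈ F, ip α' β * (sgn (α' j) * sgn (β j)) := by
  have h0 := hM 2 α hα α' hα' ∅ ∅ rfl (by simp)
  have h1 := hM 2 α hα α' hα' {i} {j} rfl (by simpa using hδ)
  have e : ∀ (γ β : V n) (k : Fin n), (ip γ β - 2 * (sgn (γ k) * sgn (β k))) ^ 2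
      = ip γ β ^ 2 - 4 * (ip γ β * (sgn (γ k) * sgn (β k))) + 4 := by
    intro γ β k
    linear_combination 4 * sgn_mul_sq (γ k) (β k)
  simp only [Finset.sum_empty, Finset.sum_singleton, e, Finset.sum_add_distrib,
    Finset.sum_sub_distrib, ← Finset.mul_sum, mul_zero, sub_zero] at h0 h1
  linarith

/-- Either any two columns are orthogonal, or any two codewords are antipodal. -/
lemma pair_sum {n δ : ℕ} {F : Finset (V n)} (hM : Moments F δ) (hδ : 4 ≤ δ) :
    (∀ i j : Fin n, i ≠ j → ∑ β ∈ F, sgn (β i) * sgn (β j) = 0) ∨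
    (∀ α ∈ F, ∀ β ∈ F, α ≠ β → ∀ i, α i ≠ β i) := by
  have key : ∀ α ∈ F, ∀ α' ∈ F, ∀ i j i' j' : Fin n, i ≠ j → i' ≠ j' →
      sgn (α i) * sgn (α j) * ∑ β ∈ F, sgn (β i) * sgn (β j) =
      sgn (α' i') * sgn (α' j') * ∑ β ∈ F, sgn (β i') * sgn (β j') := by
    intro α hα α' hα' i j i' j' hij hij'
    have h0 := hM 2 α hα α' hα' ∅ ∅ rfl (by simp)
    have h2 := hM 2 α hα α' hα' {i, j} {i', j'}
      (by rw [Finset.card_pair hij, Finset.card_pair hij']) (by rw [Finset.card_pair hij]; omega)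
    have h3 := sum_ip_mul hM (by omega) hα hα' i i'
    have h4 := sum_ip_mul hM (by omega) hα hα' j j'
    have e : ∀ (γ β : V n) (k l : Fin n),
        (ip γ β - 2 * (sgn (γ k) * sgn (β k) + sgn (γ l) * sgn (β l))) ^ 2
        = ip γ β ^ 2 - 4 * (ip γ β * (sgn (γ k) * sgn (β k)))
          - 4 * (ip γ β * (sgn (γ l) * sgn (β l))) + 8 +
          8 * (sgn (γ k) * sgn (γ l) * (sgn (β k) * sgn (β l))) := by
      intro γ β k l
      linear_combination 4 * sgn_mul_sq (γ k) (β k) + 4 * sgn_mul_sq (γ l) (β l)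
    simp only [Finset.sum_empty, Finset.sum_pair hij, Finset.sum_pair hij', e,
      Finset.sum_add_distrib, Finset.sum_sub_distrib, ← Finset.mul_sum, mul_zero, sub_zero]
      at h0 h2 h3 h4
    linarith
  by_contra! hcon
  obtain ⟨⟨i, j, hij, hne⟩, α, hα, β, hβ, hαβ, k, hk⟩ := hcon
  obtain ⟨l, hl⟩ := Function.ne_iff.1 hαβ
  have hkl : k ≠ l := by rintro rfl; exact hl hk
  have h1 := key α hα β hβ k l k l hkl hkl
  have h2 := key α hα α hα i j k l hij hkl
  rw [hk, sgn_ne hl] at h1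
  have h3 : sgn (α i) * sgn (α j) * ∑ β ∈ F, sgn (β i) * sgn (β j) = 0 := by
    rw [h2, hk]; linarith
  apply hne
  rcases sgn_eq (α i) with h | h <;> rcases sgn_eq (α j) with h' | h' <;>
    rw [h, h'] at h3 <;> linarith

/-- With orthogonal balanced columns, the second moment identity
`∑ (P - n) (P + 1) = 0` forces the code to be equidistant with `n + 1` codewords. -/
lemma equidistant {n : ℕ} {F : Finset (V n)} (hS : ∀ i, ∑ β ∈ F, sgn (β i) = 0)
    (hS2 : ∀ i j : Fin n, i ≠ j → ∑ β ∈ F, sgn (β i) * sgn (β j) = 0)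
    (hP : ∀ α ∈ F, ∀ β ∈ F, α ≠ β → ip α β ≤ -1) {α : V n} (hα : α ∈ F) :
    (∀ β ∈ F, α ≠ β → ip α β = -1) ∧ F.card = n + 1 := by
  have hsq : ∑ β ∈ F, ip α β ^ 2 = n * F.card := by
    have : ∀ β : V n, ip α β ^ 2
        = ∑ i, ∑ j, sgn (α i) * sgn (α j) * (sgn (β i) * sgn (β j)) := by
      intro β
      rw [sq, ip, Finset.sum_mul_sum]
      refine Finset.sum_congr rfl fun i _ => Finset.sum_congr rfl fun j _ => by ring
    simp only [this]
    rw [Finset.sum_comm]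
    have h : ∀ i : Fin n, ∑ β ∈ F, ∑ j, sgn (α i) * sgn (α j) * (sgn (β i) * sgn (β j))
        = F.card := by
      intro i
      rw [Finset.sum_comm]
      rw [Finset.sum_eq_single i]
      · simp [sgn_sq]
      · intro j _ hj
        rw [← Finset.mul_sum, hS2 i j (Ne.symm hj), mul_zero]
      · simp
    simp [h]
  have h1 := sum_ip hS α
  have h0 : ∑ β ∈ F, (ip α β - n) * (ip α β + 1) = 0 := by
    have : ∀ β, (ip α β - n) * (ip α β + 1) = ip α β ^ 2 + (1 - n) * ip α β - n := by
      intro β; ring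
    simp only [this, Finset.sum_add_distrib, Finset.sum_sub_distrib, ← Finset.mul_sum, h1, hsq]
    simp; ring
  have hnn : ∀ β ∈ F, 0 ≤ (ip α β - n) * (ip α β + 1) := by
    intro β hβ
    by_cases h : α = β
    · subst h; simp [ip_self]
    · have := hP α hα β hβ h
      nlinarith [(Nat.cast_nonneg n : (0 : ℤ) ≤ n)]
  have hall : ∀ β ∈ F, α ≠ β → ip α β = -1 := by
    intro β hβ h
    have hz := (Finset.sum_eq_zero_iff_of_nonneg hnn).1 h0 β hβ
    have := hP α hα β hβ h
    rcases mul_eq_zero.1 hz with h | h <;> omega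
  refine ⟨hall, ?_⟩
  rw [← Finset.add_sum_erase F _ hα, ip_self, Finset.sum_congr rfl
    (fun β hβ => hall β (Finset.mem_of_mem_erase hβ) (Finset.ne_of_mem_erase hβ).symm)] at h1
  rw [Finset.sum_const, Finset.card_erase_of_mem hα] at h1
  have : 0 < F.card := Finset.card_pos.2 ⟨α, hα⟩
  simp at h1
  omega

/-- The sum counts with weight four the positions where both signs are `1`. In particular, two
orthogonal balanced `±1`-vectors have length divisible by four. -/
lemma four_dvd {ι : Type*} (s : Finset ι) (f g : ι → ZMod 2) :
    (4 : ℤ) ∣ s.card + ∑ b ∈ s, sgn (f b) + ∑ b ∈ s, sgn (g b) + ∑ b ∈ s, sgn (f b) * sgn (g b) := by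
  have : (s.card : ℤ) + ∑ b ∈ s, sgn (f b) + ∑ b ∈ s, sgn (g b) + ∑ b ∈ s, sgn (f b) * sgn (g b)
      = ∑ b ∈ s, (1 + sgn (f b)) * (1 + sgn (g b)) := by
    rw [Finset.card_eq_sum_ones]
    push_cast
    rw [← Finset.sum_add_distrib, ← Finset.sum_add_distrib, ← Finset.sum_add_distrib]
    exact Finset.sum_congr rfl fun b _ => by ring
  rw [this]
  refine Finset.dvd_sum fun b _ => ?_
  generalize f b = x
  generalize g b = y
  revert x y; decide

/-! ### Excluding minimum distance at least six -/

/-- If `δ ≥ 6`, the third moment makes the products of any three columns of an equidistant code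
balanced; summing the cubes of the inner products then gives `n ^ 3 = n`. -/
lemma not_six_le {n δ : ℕ} {F : Finset (V n)} (hM : Moments F δ) (hδ : 6 ≤ δ) (hn : 4 ≤ n)
    (hS : ∀ i, ∑ β ∈ F, sgn (β i) = 0)
    (hS2 : ∀ i j : Fin n, i ≠ j → ∑ β ∈ F, sgn (β i) * sgn (β j) = 0)
    (hE : ∀ α ∈ F, ∀ β ∈ F, α ≠ β → ip α β = -1) (hc : F.card = n + 1) : False := by
  have expand : ∀ α ∈ F, ∀ i j k : Fin n, i ≠ j → i ≠ k → j ≠ k →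
      ∑ β ∈ F, (ip α β - 2 * ∑ l ∈ {i, j, k}, sgn (α l) * sgn (β l)) ^ 3
      = ((n : ℤ) - 6) ^ 3 + 343 - 37 * F.card - 48 * (sgn (α i) * sgn (α j) * sgn (α k) *
        ∑ β ∈ F, sgn (β i) * sgn (β j) * sgn (β k)) := by
    intro α hα i j k hij hik hjk
    have h1 : ∀ β ∈ F, (ip α β - 2 * ∑ l ∈ {i, j, k}, sgn (α l) * sgn (β l)) ^ 3 =
        (if β = α then ((n : ℤ) - 6) ^ 3 + 343 else 0) - 37
        - 62 * (sgn (α i) * sgn (β i)) - 62 * (sgn (α j) * sgn (β j))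
        - 62 * (sgn (α k) * sgn (β k))
        - 24 * (sgn (α i) * sgn (α j) * (sgn (β i) * sgn (β j)))
        - 24 * (sgn (α i) * sgn (α k) * (sgn (β i) * sgn (β k)))
        - 24 * (sgn (α j) * sgn (α k) * (sgn (β j) * sgn (β k)))
        - 48 * (sgn (α i) * sgn (α j) * sgn (α k) * (sgn (β i) * sgn (β j) * sgn (β k))) := by
      intro β hβ
      have hs : ∑ l ∈ {i, j, k}, sgn (α l) * sgn (β l)
          = sgn (α i) * sgn (β i) + (sgn (α j) * sgn (β j) + sgn (α k) * sgn (β k)) := by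
        rw [Finset.sum_insert (by simp [hij, hik]), Finset.sum_pair hjk]
      rw [hs]
      by_cases h : β = α
      · subst h
        have h1 : ∀ l, sgn (β l) * sgn (β l) = 1 := fun l => sgn_sq _
        have e1 : sgn (β i) * sgn (β j) * (sgn (β i) * sgn (β j)) = 1 := by
          rw [mul_mul_mul_comm, h1, h1]; rfl
        have e2 : sgn (β i) * sgn (β k) * (sgn (β i) * sgn (β k)) = 1 := by
          rw [mul_mul_mul_comm, h1, h1]; rfl
        have e3 : sgn (β j) * sgn (β k) * (sgn (β j) * sgn (β k)) = 1 := by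
          rw [mul_mul_mul_comm, h1, h1]; rfl
        have e4 : sgn (β i) * sgn (β j) * sgn (β k) * (sgn (β i) * sgn (β j) * sgn (β k)) = 1 := by
          rw [mul_mul_mul_comm, e1, h1]; rfl
        rw [e1, e2, e3, e4, h1, h1, h1, ip_self, if_pos rfl]; ring
      · rw [hE α hα β hβ (Ne.symm h), if_neg h]
        rcases sgn_eq (α i) with h | h <;> rcases sgn_eq (α j) with h' | h' <;>
        rcases sgn_eq (α k) with h'' | h'' <;> rcases sgn_eq (β i) with g | g <;>
        rcases sgn_eq (β j) with g' | g' <;> rcases sgn_eq (β k) with g'' | g'' <;>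
        rw [h, h', h'', g, g', g''] <;> norm_num
    rw [Finset.sum_congr rfl h1]
    simp only [Finset.sum_sub_distrib, ← Finset.mul_sum, hS, hS2 i j hij, hS2 i k hik,
      hS2 j k hjk, Finset.sum_ite_eq', hα, if_true, Finset.sum_const]
    simp; ring
  have key : ∀ α ∈ F, ∀ α' ∈ F, ∀ i j k i' j' k' : Fin n, i ≠ j → i ≠ k → j ≠ k →
      i' ≠ j' → i' ≠ k' → j' ≠ k' →
      sgn (α i) * sgn (α j) * sgn (α k) * ∑ β ∈ F, sgn (β i) * sgn (β j) * sgn (β k) =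
      sgn (α' i') * sgn (α' j') * sgn (α' k') *
        ∑ β ∈ F, sgn (β i') * sgn (β j') * sgn (β k') := by
    intro α hα α' hα' i j k i' j' k' hij hik hjk hij' hik' hjk'
    have c1 : ({i, j, k} : Finset (Fin n)).card = 3 := Finset.card_eq_three.2
      ⟨i, j, k, hij, hik, hjk, rfl⟩
    have c2 : ({i', j', k'} : Finset (Fin n)).card = 3 := Finset.card_eq_three.2
      ⟨i', j', k', hij', hik', hjk', rfl⟩
    have h := hM 3 α hα α' hα' {i, j, k} {i', j', k'} (c1.trans c2.symm) (by omega)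
    rw [expand α hα i j k hij hik hjk, expand α' hα' i' j' k' hij' hik' hjk'] at h
    linarith
  have hS3 : ∀ i j k : Fin n, i ≠ j → i ≠ k → j ≠ k →
      ∑ β ∈ F, sgn (β i) * sgn (β j) * sgn (β k) = 0 := by
    by_contra! hcon
    obtain ⟨i, j, k, hij, hik, hjk, hne⟩ := hcon
    have nz : ∀ α : V n, ∀ i j k, sgn (α i) * sgn (α j) * sgn (α k) ≠ 0 := by
      intro α i j k
      rcases sgn_eq (α i) with h | h <;> rcases sgn_eq (α j) with h' | h' <;>
        rcases sgn_eq (α k) with h'' | h'' <;> simp [h, h', h'']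
    -- Otherwise the product of any three columns is constant, hence so is that of any two.
    have const : ∀ α ∈ F, ∀ α' ∈ F, ∀ p q r : Fin n, p ≠ q → p ≠ r → q ≠ r →
        sgn (α p) * sgn (α q) * sgn (α r) = sgn (α' p) * sgn (α' q) * sgn (α' r) := by
      intro α hα α' hα' p q r hpq hpr hqr
      have h1 := key α hα α' hα' p q r p q r hpq hpr hqr hpq hpr hqr
      have h2 := key α hα α hα p q r i j k hpq hpr hqr hij hik hjk
      refine mul_right_cancel₀ ?_ h1
      intro h0
      rw [h0, mul_zero] at h2
      exact mul_ne_zero (nz α i j k) hne h2.symm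
    obtain ⟨α, hα⟩ : F.Nonempty := Finset.card_pos.1 (by omega)
    let p : Fin n := ⟨0, by omega⟩
    let q : Fin n := ⟨1, by omega⟩
    let r : Fin n := ⟨2, by omega⟩
    let l : Fin n := ⟨3, by omega⟩
    have hpq : p ≠ q := by simp [p, q]
    have hpr : p ≠ r := by simp [p, r]
    have hqr : q ≠ r := by simp [q, r]
    have hpl : p ≠ l := by simp [p, l]
    have hql : q ≠ l := by simp [q, l]
    have hrl : r ≠ l := by simp [r, l]
    have h0 := hS2 p l hpl
    have h1 : ∀ β ∈ F, sgn (β p) * sgn (β l) = (sgn (α p) * sgn (α q) * sgn (α r)) *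
        (sgn (α q) * sgn (α r) * sgn (α l)) := by
      intro β hβ
      rw [const α hα β hβ p q r hpq hpr hqr, const α hα β hβ q r l hqr hql hrl]
      linear_combination (-sgn (β p) * sgn (β l) * (sgn (β r) * sgn (β r))) * sgn_sq (β q)
        - sgn (β p) * sgn (β l) * sgn_sq (β r)
    rw [Finset.sum_congr rfl h1, Finset.sum_const, smul_eq_zero] at h0
    rcases h0 with h0 | h0
    · omega
    · exact mul_ne_zero (nz α p q r) (nz α q r l) h0
  obtain ⟨α, hα⟩ : F.Nonempty := Finset.card_pos.1 (by omega)
  have hcube : ∑ β ∈ F, ip α β ^ 3 = 0 := by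
    have : ∀ β : V n, ip α β ^ 3 = ∑ i, ∑ j, ∑ k, sgn (α i) * sgn (α j) * sgn (α k) *
        (sgn (β i) * sgn (β j) * sgn (β k)) := by
      intro β
      rw [pow_succ, sq, ip, Finset.sum_mul_sum, Finset.sum_mul]
      refine Finset.sum_congr rfl fun i _ => ?_
      rw [Finset.sum_mul_sum]
      refine Finset.sum_congr rfl fun j _ => Finset.sum_congr rfl fun k _ => by ring
    simp only [this]
    rw [Finset.sum_comm]
    refine Finset.sum_eq_zero fun i _ => ?_
    rw [Finset.sum_comm]
    refine Finset.sum_eq_zero fun j _ => ?_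
    rw [Finset.sum_comm]
    refine Finset.sum_eq_zero fun k _ => ?_
    rw [← Finset.mul_sum]
    by_cases hij : i = j
    · subst hij; simp [sgn_sq, hS]
    by_cases hik : i = k
    · subst hik
      have : ∀ β : V n, sgn (β i) * sgn (β j) * sgn (β i) = sgn (β j) := fun β => by
        linear_combination sgn (β j) * sgn_sq (β i)
      simp [this, hS]
    by_cases hjk : j = k
    · subst hjk; simp [mul_assoc, sgn_sq, hS]
    rw [hS3 i j k hij hik hjk, mul_zero]
  rw [← Finset.add_sum_erase F _ hα, ip_self, Finset.sum_congr rfl (fun β hβ => by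
    rw [hE α hα β (Finset.mem_of_mem_erase hβ) (Finset.ne_of_mem_erase hβ).symm]),
    Finset.sum_const, Finset.card_erase_of_mem hα, hc] at hcube
  simp at hcube
  have : (4 : ℤ) ≤ n := by exact_mod_cast hn
  have hpos : (0 : ℤ) < n * (n * n - 1) := mul_pos (by omega) (by nlinarith)
  linarith [show (n : ℤ) * (n * n - 1) = n ^ 3 + -n by ring]

/-! ### Uniqueness in length seven -/

lemma sgn_add (a b : ZMod 2) : sgn (a + b) = sgn a * sgn b := by
  revert a b; decide

lemma sgn_le (a : ZMod 2) : sgn a ≤ 1 := by revert a; decide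

/-- If any two of the words `a, b, c, 0` of length seven are at distance four and `c ≠ a + b`, then
the columns of the array with rows `a, b, c` are distinct and nonzero. -/
lemma columns_inj {a b c : V 7} (ha : ∑ i, sgn (a i) = -1) (hb : ∑ i, sgn (b i) = -1)
    (hc : ∑ i, sgn (c i) = -1) (hab : ip a b = -1) (hac : ip a c = -1) (hbc : ip b c = -1)
    (hne : c ≠ a + b) :
    (Function.Injective fun i => (a i, b i, c i)) ∧ ∀ i, (a i, b i, c i) ≠ 0 := by
  obtain ⟨T, hT⟩ : ∃ T, T = ∑ i, sgn (a i) * sgn (b i) * sgn (c i) := ⟨_, rfl⟩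
  -- Eight times the number of columns equal to `(x, y, z)`.
  have count : ∀ x y z : ZMod 2,
      ∑ i, (1 + sgn x * sgn (a i)) * (1 + sgn y * sgn (b i)) * (1 + sgn z * sgn (c i))
      = 7 - (sgn x + sgn y + sgn z) - (sgn x * sgn y + sgn x * sgn z + sgn y * sgn z)
        + sgn x * sgn y * sgn z * T := by
    intro x y z
    have e : ∀ i, (1 + sgn x * sgn (a i)) * (1 + sgn y * sgn (b i)) * (1 + sgn z * sgn (c i))
        = 1 + sgn x * sgn (a i) + sgn y * sgn (b i) + sgn z * sgn (c i)
          + sgn x * sgn y * (sgn (a i) * sgn (b i)) + sgn x * sgn z * (sgn (a i) * sgn (c i))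
          + sgn y * sgn z * (sgn (b i) * sgn (c i))
          + sgn x * sgn y * sgn z * (sgn (a i) * sgn (b i) * sgn (c i)) := fun i => by ring
    simp only [ip] at hab hac hbc
    simp only [e, Finset.sum_add_distrib, ← Finset.mul_sum, ha, hb, hc, hab, hac, hbc, ← hT]
    simp; ring
  have hnn : ∀ x y z u v w : ZMod 2,
      0 ≤ (1 + sgn x * sgn u) * (1 + sgn y * sgn v) * (1 + sgn z * sgn w) := by decide
  have h8 : ∀ x y z : ZMod 2,
      (8 : ℤ) = (1 + sgn x * sgn x) * (1 + sgn y * sgn y) * (1 + sgn z * sgn z) := by decide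
  have hT1 : T = -1 := by
    have h0 := count 0 0 0
    have s0 : sgn 0 = 1 := rfl
    rw [s0] at h0
    have hd : (8 : ℤ) ∣ ∑ i, (1 + 1 * sgn (a i)) * (1 + 1 * sgn (b i)) * (1 + 1 * sgn (c i)) := by
      refine Finset.dvd_sum fun i _ => ?_
      have : ∀ u v w : ZMod 2, (8 : ℤ) ∣ (1 + 1 * sgn u) * (1 + 1 * sgn v) * (1 + 1 * sgn w) := by
        decide
      exact this _ _ _
    have hge : 0 ≤ ∑ i, (1 + 1 * sgn (a i)) * (1 + 1 * sgn (b i)) * (1 + 1 * sgn (c i)) :=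
      Finset.sum_nonneg fun i _ => hnn 0 0 0 _ _ _
    have hlt : T < ∑ _i : Fin 7, (1 : ℤ) := by
      obtain ⟨i, hi⟩ := Function.ne_iff.1 hne
      rw [hT]
      refine Finset.sum_lt_sum (fun j _ => ?_) ⟨i, Finset.mem_univ _, ?_⟩
      · rw [← sgn_add, ← sgn_add]; exact sgn_le _
      · have : ∀ u v w : ZMod 2, w ≠ u + v → sgn u * sgn v * sgn w < 1 := by decide
        exact this _ _ _ hi
    simp only [Finset.sum_const, Finset.card_univ, Fintype.card_fin] at hlt
    norm_num at hlt
    omega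
  rw [hT1] at count
  refine ⟨fun i j hij => ?_, fun i hi => ?_⟩
  · by_contra hne'
    simp only [Prod.mk.injEq] at hij
    have h := count (a i) (b i) (c i)
    have hle := Finset.sum_le_sum_of_subset_of_nonneg (Finset.subset_univ ({i, j} : Finset (Fin 7)))
      (f := fun k => (1 + sgn (a i) * sgn (a k)) * (1 + sgn (b i) * sgn (b k)) *
        (1 + sgn (c i) * sgn (c k))) (fun k _ _ => hnn _ _ _ _ _ _)
    rw [Finset.sum_pair hne', ← hij.1, ← hij.2.1, ← hij.2.2, ← h8, h] at hle
    revert hle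
    generalize a i = x
    generalize b i = y
    generalize c i = z
    revert x y z; decide
  · simp only [Prod.mk_eq_zero] at hi
    have h := count 0 0 0
    have hle := Finset.single_le_sum (f := fun k => (1 + sgn 0 * sgn (a k)) *
        (1 + sgn 0 * sgn (b k)) * (1 + sgn 0 * sgn (c k))) (fun k _ => hnn 0 0 0 _ _ _)
        (Finset.mem_univ i)
    simp only [h, hi.1, hi.2.1, hi.2.2, ← h8] at hle
    revert hle; decide

/-- The nonzero columns of height three over `F_2`. -/
abbrev Col := {p : ZMod 2 × ZMod 2 × ZMod 2 // p ≠ 0}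

set_option maxRecDepth 100000 in
/-- A word at distance zero or four from each of `0, r1, r2, r3` is a combination of
`r1, r2, r3`. -/
lemma mem_of_dist : ∀ x : V 7, (hammingDist 0 x = 0 ∨ hammingDist 0 x = 4) →
    (hammingDist r1 x = 0 ∨ hammingDist r1 x = 4) → (hammingDist r2 x = 0 ∨ hammingDist r2 x = 4) →
    (hammingDist r3 x = 0 ∨ hammingDist r3 x = 4) →
    ∃ p : ZMod 2 × ZMod 2 × ZMod 2, p.1 • r1 + p.2.1 • r2 + p.2.2 • r3 = x := by
  decide

lemma dist_trans {n : ℕ} (α β γ : V n) (σ : Equiv.Perm (Fin n)) :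
    hammingDist (α + β ∘ σ) (α + γ ∘ σ) = hammingDist β γ := by
  unfold hammingDist
  refine Finset.card_bij (fun i _ => σ i) (by simp) (fun i _ j _ h => σ.injective h) ?_
  intro j hj
  exact ⟨σ.symm j, by simpa using hj, by simp⟩

/-- Eight words of length seven at mutual distance four (inner product `-1`) are unique up to
equivalence: relative to a base word `α`, choose `u, v` and then `w ≠ α + u + v`. The columns of the
array formed by `u, v, w` are the seven nonzero ones, as are those of `r1, r2, r3`, so a coordinate
permutation matches them, and the remaining words are then determined. -/
lemma equiv_simplex {F : Finset (V 7)} (hE : ∀ α ∈ F, ∀ β ∈ F, α ≠ β → ip α β = -1)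
    (hc : F.card = 8) : CodeEquiv (F : Set (V 7))
      ((Submodule.span (ZMod 2) {r1, r2, r3} : Submodule (ZMod 2) (V 7)) : Set (V 7)) := by
  obtain ⟨α, hα⟩ : F.Nonempty := Finset.card_pos.1 (by omega)
  obtain ⟨u, hu, hu'⟩ := Finset.exists_mem_notMem_of_card_lt_card (s := {α}) (t := F) (by simp [hc])
  obtain ⟨v, hv, hv'⟩ := Finset.exists_mem_notMem_of_card_lt_card (s := {α, u}) (t := F)
    (by have := Finset.card_le_two (a := α) (b := u); omega)
  obtain ⟨w, hw, hw'⟩ := Finset.exists_mem_notMem_of_card_lt_card (s := {α, u, v, α + u + v}) (t := F)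
    (by have := Finset.card_le_four (a := α) (b := u) (c := v) (d := α + u + v); omega)
  simp only [Finset.mem_insert, Finset.mem_singleton, not_or] at hu' hv' hw'
  have s1 : ∀ β ∈ F, β ≠ α → ∑ i, sgn ((α + β) i) = -1 := by
    intro β hβ h
    rw [← hE α hα β hβ h.symm, ip]
    simp [sgn_add]
  have s2 : ∀ β ∈ F, ∀ γ ∈ F, β ≠ γ → ip (α + β) (α + γ) = -1 := by
    intro β hβ γ hγ h
    rw [← hE β hβ γ hγ h, ip, ip]
    refine Finset.sum_congr rfl fun i _ => ?_
    simp only [Pi.add_apply, sgn_add]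
    linear_combination sgn (β i) * sgn (γ i) * sgn_sq (α i)
  have hself : ∀ x : V 7, x + x = 0 := fun x => funext fun i => CharTwo.add_self_eq_zero _
  obtain ⟨finj, fnz⟩ := columns_inj (s1 u hu hu') (s1 v hv hv'.1) (s1 w hw hw'.1)
    (s2 u hu v hv (Ne.symm hv'.2)) (s2 u hu w hw (Ne.symm hw'.2.1))
    (s2 v hv w hw (Ne.symm hw'.2.2.1)) (by
      intro h
      apply hw'.2.2.2
      have : α + (α + w) = α + (α + u + (α + v)) := by rw [h]
      rw [← add_assoc, hself, zero_add] at this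
      rw [this]
      have e : α + (α + u + (α + v)) = (α + α) + (α + u + v) := by abel
      rw [e, hself, zero_add])
  have hcard : Fintype.card (Fin 7) = Fintype.card Col := by decide
  let f : Fin 7 → Col := fun i => ⟨((α + u) i, (α + v) i, (α + w) i), fnz i⟩
  let g : Fin 7 → Col := fun i => ⟨(r1 i, r2 i, r3 i), by revert i; decide⟩
  have hf : Function.Bijective f := (Fintype.bijective_iff_injective_and_card f).2
    ⟨fun i j h => finj (congrArg Subtype.val h), hcard⟩
  have hg : Function.Bijective g := (Fintype.bijective_iff_injective_and_card g).2
    ⟨by decide, hcard⟩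
  let σ : Equiv.Perm (Fin 7) := (Equiv.ofBijective g hg).trans (Equiv.ofBijective f hf).symm
  have hσ : ∀ i, f (σ i) = g i := fun i => (Equiv.ofBijective f hf).apply_symm_apply (g i)
  have e1 : α ∘ σ + u ∘ σ = r1 := funext fun i => congrArg (fun p : Col => p.1.1) (hσ i)
  have e2 : α ∘ σ + v ∘ σ = r2 := funext fun i => congrArg (fun p : Col => p.1.2.1) (hσ i)
  have e3 : α ∘ σ + w ∘ σ = r3 := funext fun i => congrArg (fun p : Col => p.1.2.2) (hσ i)
  have e0 : α ∘ σ + α ∘ σ = 0 := hself _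
  have hd : ∀ β ∈ F, ∀ γ ∈ F, hammingDist β γ = 0 ∨ hammingDist β γ = 4 := by
    intro β hβ γ hγ
    by_cases h : β = γ
    · left; simp [h]
    · right
      have := hE β hβ γ hγ h
      rw [ip_eq] at this
      push_cast at this
      omega
  let comb : ZMod 2 × ZMod 2 × ZMod 2 → V 7 := fun p => p.1 • r1 + p.2.1 • r2 + p.2.2 • r3
  have hspan : ((Submodule.span (ZMod 2) {r1, r2, r3} : Submodule (ZMod 2) (V 7)) : Set (V 7))
      = Set.range comb := by
    ext x
    simp only [SetLike.mem_coe, Submodule.mem_span_triple, Set.mem_range, Prod.exists, comb]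
  refine ⟨α ∘ σ, σ, ?_⟩
  rw [hspan]
  refine Set.eq_of_subset_of_ncard_le ?_ ?_ (Set.toFinite _)
  · rintro _ ⟨β, hβ, rfl⟩
    refine mem_of_dist _ ?_ ?_ ?_ ?_
    · rw [← e0, dist_trans]; exact hd α hα β hβ
    · rw [← e1, dist_trans]; exact hd u hu β hβ
    · rw [← e2, dist_trans]; exact hd v hv β hβ
    · rw [← e3, dist_trans]; exact hd w hw β hβ
  · rw [Set.ncard_image_of_injective, Set.ncard_coe_finset, hc, ← Set.image_univ]
    · refine (Set.ncard_image_le (Set.toFinite _)).trans ?_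
      rw [Set.ncard_univ, Nat.card_eq_fintype_card]
      decide
    · intro x y h
      have h' : hammingDist (α ∘ σ + x ∘ σ) (α ∘ σ + y ∘ σ) = 0 := by simpa using h
      rw [dist_trans] at h'
      simpa using h'

/-! ### The repetition code -/

/-- Pairwise antipodal codewords form a repetition code. -/
lemma equiv_repetition {n : ℕ} {F : Finset (V n)} (hc : 1 < F.card)
    (h : ∀ α ∈ F, ∀ β ∈ F, α ≠ β → ∀ i, α i ≠ β i) : CodeEquiv (F : Set (V n)) {0, 1} := by
  obtain ⟨α, hα, γ, hγ, hne⟩ := Finset.one_lt_card.1 hc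
  have h0 : α + α = 0 := funext fun i => CharTwo.add_self_eq_zero _
  have h1 : ∀ β ∈ F, α ≠ β → α + β = 1 := by
    intro β hβ hb
    have : ∀ x y : ZMod 2, x ≠ y → x + y = 1 := by decide
    exact funext fun i => this _ _ (h α hα β hβ hb i)
  refine ⟨α, Equiv.refl _, ?_⟩
  ext x
  simp only [Equiv.coe_refl, Function.comp_id, Set.mem_image, SetLike.mem_coe,
    Set.mem_insert_iff, Set.mem_singleton_iff]
  constructor
  · rintro ⟨β, hβ, rfl⟩
    by_cases hb : α = β
    · subst hb; exact Or.inl h0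
    · exact Or.inr (h1 β hβ hb)
  · rintro (rfl | rfl)
    · exact ⟨α, hα, h0⟩
    · exact ⟨γ, hγ, h1 γ hγ hne⟩

/-! ### Minimum distance three -/

/-- In length four with `δ = 3`, the inner products with `α` sum to zero, so the code has at most
three words; an even number of words then leaves only two, which must be antipodal. -/
lemma not_len_four {F : Finset (V 4)} (hS : ∀ i, ∑ β ∈ F, sgn (β i) = 0)
    (hP : ∀ α ∈ F, ∀ β ∈ F, α ≠ β → ip α β ≤ -2)
    {α β : V 4} (hα : α ∈ F) (hβ : β ∈ F) (hd : ip α β = -2) : False := by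
  have hne : β ≠ α := by rintro rfl; rw [ip_self] at hd; norm_num at hd
  have h1 := sum_ip hS α
  rw [← Finset.add_sum_erase F _ hα, ← Finset.add_sum_erase (F.erase α) _
    (Finset.mem_erase.2 ⟨hne, hβ⟩), ip_self, hd] at h1
  have h2 : ∑ x ∈ (F.erase α).erase β, ip α x ≤ ∑ _x ∈ (F.erase α).erase β, (-2 : ℤ) :=
    Finset.sum_le_sum fun x hx => by
      simp only [Finset.mem_erase] at hx
      exact hP α hα x hx.2.2 (Ne.symm hx.2.1)
  have h3 : ((F.erase α).erase β).card + 2 = F.card := by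
    rw [← Finset.card_erase_add_one hα,
      ← Finset.card_erase_add_one (Finset.mem_erase.2 ⟨hne, hβ⟩)]
  -- A balanced column has even length.
  have h4 := four_dvd F (fun x => x 0) (fun x => x 0)
  simp only [hS, sgn_sq, Finset.sum_const] at h4
  simp only [Finset.sum_const, nsmul_eq_mul, mul_one] at h2 h4
  rcases Nat.eq_zero_or_pos ((F.erase α).erase β).card with h | h
  · rw [Finset.card_eq_zero.1 h] at h1
    simp at h1
  · push_cast at h1
    omega

/-- In length five with `δ = 3`, the second moment of the inner products with a codeword is
divisible by five. This forces six words at mutual distance three, which contradicts parity. -/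
lemma not_len_five {F : Finset (V 5)} (hM : Moments F 3) (hS : ∀ i, ∑ β ∈ F, sgn (β i) = 0)
    (hP : ∀ α ∈ F, ∀ β ∈ F, α ≠ β → ip α β = -1 ∨ ip α β = -3 ∨ ip α β = -5)
    {α β : V 5} (hα : α ∈ F) (hβ : β ∈ F) (hd : ip α β = -1) : False := by
  have key : ∀ α ∈ F, ∀ β ∈ F, ip α β = -1 →
      F.card = 6 ∧ ∀ γ ∈ F, α ≠ γ → ip α γ = -1 := by
    intro α hα β hβ hd
    have hne : β ≠ α := by rintro rfl; rw [ip_self] at hd; norm_num at hd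
    have h1 := sum_ip hS α
    have hneg : ∀ γ ∈ F.erase α, ip α γ + 1 ≤ 0 := by
      intro γ hγ
      have := hP α hα γ (Finset.mem_of_mem_erase hγ) (Finset.ne_of_mem_erase hγ).symm
      omega
    have h5 : ∑ γ ∈ F.erase α, ip α γ = -5 := by
      rw [← Finset.add_sum_erase F _ hα, ip_self] at h1
      push_cast at h1
      omega
    have hn5 : ∀ γ ∈ F.erase α, ip α γ ≠ -5 := by
      intro γ hγ h
      have hγβ : γ ≠ β := by rintro rfl; omega
      have hβ' : β ∈ (F.erase α).erase γ :=
        Finset.mem_erase.2 ⟨hγβ.symm, Finset.mem_erase.2 ⟨hne, hβ⟩⟩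
      rw [← Finset.add_sum_erase _ _ hγ, ← Finset.add_sum_erase _ _ hβ', h, hd] at h5
      have : ∑ x ∈ ((F.erase α).erase γ).erase β, ip α x ≤ 0 :=
        Finset.sum_nonpos fun x hx => by
          have := hneg x (Finset.mem_of_mem_erase (Finset.mem_of_mem_erase hx))
          omega
      omega
    have hsq : ∃ a : ℤ, ∑ γ ∈ F, ip α γ ^ 2 = 5 * a := by
      refine ⟨∑ γ ∈ F, ip α γ * (sgn (α 0) * sgn (γ 0)), ?_⟩
      have e : ∀ γ, ip α γ ^ 2 = ∑ i, ip α γ * (sgn (α i) * sgn (γ i)) := by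
        intro γ; rw [← Finset.mul_sum, sq]; rfl
      simp only [e]
      rw [Finset.sum_comm, Finset.sum_congr rfl fun i _ =>
        sum_ip_mul hM (by norm_num) hα hα i 0]
      simp
    obtain ⟨a, ha⟩ := hsq
    have h48 : ∑ γ ∈ F, (ip α γ ^ 2 + 4 * ip α γ + 3) = 48 := by
      rw [← Finset.add_sum_erase F _ hα, ip_self, Finset.sum_eq_zero]
      · norm_num
      · intro γ hγ
        have h' := hn5 γ hγ
        rcases hP α hα γ (Finset.mem_of_mem_erase hγ) (Finset.ne_of_mem_erase hγ).symm
          with h | h | h <;> rw [h] at h' ⊢ <;> norm_num at *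
    simp only [Finset.sum_add_distrib, ← Finset.mul_sum, ha, h1, Finset.sum_const,
      nsmul_eq_mul] at h48
    have hc : (F.erase α).card + 1 = F.card := Finset.card_erase_add_one hα
    have hpos : 0 < (F.erase α).card :=
      Finset.card_pos.2 ⟨β, Finset.mem_erase.2 ⟨hne, hβ⟩⟩
    have hsum : ∑ γ ∈ F.erase α, (ip α γ + 1) = (F.erase α).card - 5 := by
      rw [Finset.sum_add_distrib, h5]; simp; ring
    have hle : ∑ γ ∈ F.erase α, (ip α γ + 1) ≤ 0 := Finset.sum_nonpos hneg
    have hc6 : F.card = 6 := by omega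
    refine ⟨hc6, fun γ hγ h => ?_⟩
    have hz : ∑ γ ∈ F.erase α, (ip α γ + 1) = 0 := by rw [hsum]; omega
    have := (Finset.sum_eq_zero_iff_of_nonpos hneg).1 hz γ (Finset.mem_erase.2 ⟨h.symm, hγ⟩)
    omega
  obtain ⟨hc, hα1⟩ := key α hα β hβ hd
  obtain ⟨-, hβ1⟩ := key β hβ α hα (by rw [ip_comm, hd])
  obtain ⟨γ, hγ, hγ'⟩ := Finset.exists_mem_notMem_of_card_lt_card (s := {α, β}) (t := F)
    (by have := Finset.card_le_two (a := α) (b := β); omega)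
  simp only [Finset.mem_insert, Finset.mem_singleton, not_or] at hγ'
  -- From here `α, β, γ` are pairwise at distance three, and a sum of three pairwise distances
  -- must be even.
  have h4 := four_dvd Finset.univ (fun i => α i + β i) (fun i => α i + γ i)
  have e : ∀ i, sgn (α i) * sgn (β i) * (sgn (α i) * sgn (γ i)) = sgn (β i) * sgn (γ i) := by
    intro i
    linear_combination sgn (β i) * sgn (γ i) * sgn_sq (α i)
  have a1 := hα1 γ hγ (Ne.symm hγ'.1)
  have a2 := hβ1 γ hγ (Ne.symm hγ'.2)
  simp only [ip] at hd a1 a2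
  simp only [sgn_add, e, hd, a1, a2] at h4
  simp at h4

/-! ### The classification -/

/-- A binary completely regular code with more than one codeword and minimum distance
`δ > max(2, n/2)` is equivalent to the repetition code `{0,1}` (with `δ = n`), or
`(n,δ) = (7,4)` and it is equivalent to `𝓗_E`, the span of `r1, r2, r3`. -/
theorem stmt_0 {n δ : ℕ} (C : Set (V n)) (hcr : CompletelyRegular C)
    (hcard : 1 < C.ncard) (hmin : IsMinDist C δ)
    (hδ2 : 2 < δ) (hδn : n < 2 * δ) :
    (δ = n ∧ CodeEquiv C {0, 1}) ∨
    (∃ h : n = 7, δ = 4 ∧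
      CodeEquiv C ((fun x : V 7 => x ∘ Fin.cast h) ''
        ((Submodule.span (ZMod 2) {r1, r2, r3} : Submodule (ZMod 2) (V 7)) : Set (V 7)))) := by
  obtain ⟨F, rfl⟩ : ∃ F : Finset (V n), (F : Set (V n)) = C :=
    ⟨(Set.toFinite C).toFinset, by simp⟩
  rw [Set.ncard_coe_finset] at hcard
  obtain ⟨hmin1, α, hα, β, hβ, hne, hαβ⟩ := hmin
  simp only [SetLike.mem_coe] at hmin1 hα hβ
  have hM := moments hcr hmin1
  have hS := col_sum hM (by omega) hcard
  have hle : ∀ x y : V n, hammingDist x y ≤ n := fun x y => by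
    simpa using hammingDist_le_card_fintype (x := x) (y := y)
  have hδle : δ ≤ n := hαβ ▸ hle α β
  have hip := ip_eq α β
  rw [hαβ] at hip
  have hant : (∀ α ∈ F, ∀ β ∈ F, α ≠ β → ∀ i, α i ≠ β i) → δ = n := by
    intro h
    rw [← hαβ, hammingDist, Finset.filter_true_of_mem fun i _ => h α hα β hβ hne i]
    simp
  by_cases hn : δ = n
  · left
    refine ⟨hn, equiv_repetition hcard fun x hx y hy hxy i => ?_⟩
    have h1 : hammingDist x y = (Finset.univ : Finset (Fin n)).card := by
      rw [Finset.card_univ, Fintype.card_fin]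
      exact le_antisymm (hle x y) (hn ▸ hmin1 x hx y hy hxy)
    have h2 := Finset.card_filter_eq_iff.1 h1
    exact h2 i (Finset.mem_univ i)
  by_cases h3 : δ = 3
  · exfalso
    subst h3
    obtain rfl | rfl : n = 4 ∨ n = 5 := by omega
    · refine not_len_four hS (fun x hx y hy hxy => ?_) hα hβ (by rw [hip]; norm_num)
      have := hmin1 x hx y hy hxy
      rw [ip_eq]; push_cast; omega
    · refine not_len_five hM hS (fun x hx y hy hxy => ?_) hα hβ (by rw [hip]; norm_num)
      have := hmin1 x hx y hy hxy
      have := hle x y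
      rw [ip_eq]; push_cast; omega
  rcases pair_sum hM (by omega) with hS2 | h
  swap
  · exact absurd (hant h) hn
  have hP : ∀ α ∈ F, ∀ β ∈ F, α ≠ β → ip α β ≤ -1 := by
    intro x hx y hy hxy
    have := hmin1 x hx y hy hxy
    rw [ip_eq]; omega
  -- Hence the code is equidistant, `n = 2δ - 1`, and `|C| = n + 1` is divisible by four.
  have hE : ∀ α ∈ F, ∀ β ∈ F, α ≠ β → ip α β = -1 := fun x hx =>
    (equidistant hS hS2 hP hx).1
  have hc := (equidistant hS hS2 hP hα).2
  have hab := hE α hα β hβ hne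
  have h4 := four_dvd F (fun x => x ⟨0, by omega⟩) (fun x => x ⟨1, by omega⟩)
  rw [hS, hS, hS2 _ _ (by simp)] at h4
  by_cases h6 : 6 ≤ δ
  · exact (not_six_le hM h6 (by omega) hS hS2 hE hc).elim
  · right
    have h7 : n = 7 := by omega
    subst h7
    refine ⟨rfl, by omega, ?_⟩
    have := equiv_simplex hE hc
    simpa using this
end

section
/- Let C be a completely regular code in F_2^n with |C| > 1, containing the all-zero vector 0, whose minimum distance δ satisfies δ > max(2, n/2) and δ < n. Then δ is even, and for all distinct nonzero codewords α, β ∈ C the supports of α and β intersect in exactly (n+1)/4 coordinates. -/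
/-- The support of a vector: the set of coordinates where it is nonzero. -/
def supp {n : ℕ} (x : V n) : Finset (Fin n) := Finset.univ.filter (fun i => x i ≠ 0)

open Finset

/-! ### Designs with block intersections of at most half the block size -/

section Design

variable {n : ℕ}

/-- Counting pairs `(i, A)` with `i ∈ A ∩ X`, for a family in which every point lies in `r` blocks. -/
lemma sum_card_inter_eq (F : Finset (Finset (Fin n))) (r : ℕ)
    (hr : ∀ i, (F.filter (fun A => i ∈ A)).card = r) (X : Finset (Fin n)) :
    ∑ A ∈ F, (A ∩ X).card = X.card * r := by
  have h := Finset.sum_card_bipartiteAbove_eq_sum_card_bipartiteBelow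
    (s := F) (t := X) (fun A i => i ∈ A)
  simp only [Finset.bipartiteAbove, Finset.bipartiteBelow, hr, sum_const, smul_eq_mul] at h
  rw [← h]
  refine Finset.sum_congr rfl fun A _ => congrArg Finset.card ?_
  ext i; simp [and_comm]

/-- Counting triples `(i, j, A)` with `i ≠ j` both in `A ∩ X`, for a family in which any two points
lie in `l` common blocks. -/
lemma sum_card_offDiag_eq (F : Finset (Finset (Fin n))) (l : ℕ)
    (hl : ∀ i j, i ≠ j → (F.filter (fun A => i ∈ A ∧ j ∈ A)).card = l) (X : Finset (Fin n)) :
    ∑ A ∈ F, (A ∩ X).offDiag.card = X.offDiag.card * l := by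
  have h := Finset.sum_card_bipartiteAbove_eq_sum_card_bipartiteBelow
    (s := F) (t := X.offDiag) (fun A p => p.1 ∈ A ∧ p.2 ∈ A)
  simp only [Finset.bipartiteAbove, Finset.bipartiteBelow] at h
  rw [Finset.sum_congr rfl (g := fun _ => l) (s₁ := X.offDiag)
    (fun p hp => hl p.1 p.2 (Finset.mem_offDiag.1 hp).2.2), sum_const, smul_eq_mul] at h
  rw [← h]
  refine Finset.sum_congr rfl fun A _ => congrArg Finset.card ?_
  ext p; simp only [mem_offDiag, mem_inter, mem_filter]; tauto

variable {δ r : ℕ} {F : Finset (Finset (Fin n))}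

/-- The bound `2 * (A ∩ B).card ≤ δ`, summed over the blocks `B` other than a fixed block `A`, is
incompatible with `b < 2 * r` unless it holds with equality throughout. -/
lemma design_two_mul_rep (hn : n < 2 * δ) (hF : F.Nonempty) (hcard : ∀ A ∈ F, A.card = δ)
    (hint : ∀ A ∈ F, ∀ B ∈ F, A ≠ B → 2 * (A ∩ B).card ≤ δ)
    (hr : ∀ i, (F.filter (fun A => i ∈ A)).card = r) :
    F.card * δ = r * n ∧ 2 * r = F.card + 1 ∧
      ∀ A ∈ F, ∀ B ∈ F, A ≠ B → 2 * (A ∩ B).card = δ := by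
  have hpoint : F.card * δ = r * n := by
    have h := sum_card_inter_eq F r hr univ
    rw [Finset.sum_congr rfl (g := fun _ => δ) (fun A hA => by simp [hcard A hA])] at h
    simp only [sum_const, smul_eq_mul, card_univ, Fintype.card_fin] at h
    linarith
  have hb : 0 < F.card := hF.card_pos
  have hδ : 0 < δ := by omega
  have hlow : F.card < 2 * r := by
    by_contra! hc
    have : 2 * r * n ≤ F.card * n := Nat.mul_le_mul_right _ hc
    nlinarith
  have hsum : ∀ A ∈ F, δ + ∑ B ∈ F.erase A, (B ∩ A).card = δ * r := by
    intro A hA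
    rw [← hcard A hA, ← sum_card_inter_eq F r hr A, ← Finset.add_sum_erase F _ hA, inter_self]
  have hle : ∀ A ∈ F, ∀ B ∈ F.erase A, 2 * (B ∩ A).card ≤ δ := fun A hA B hB =>
    hint B (mem_of_mem_erase hB) A hA (ne_of_mem_erase hB)
  have hrb : 2 * r = F.card + 1 := by
    obtain ⟨A, hA⟩ := hF
    have h1 := Finset.sum_le_sum (hle A hA)
    rw [← Finset.mul_sum, sum_const, smul_eq_mul, card_erase_of_mem hA] at h1
    have h2 := hsum A hA
    obtain ⟨b, hb'⟩ : ∃ b, F.card = b + 1 := ⟨F.card - 1, by omega⟩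
    rw [hb', Nat.add_sub_cancel] at h1
    have : 2 * r ≤ b + 2 := by
      by_contra! hc
      nlinarith
    omega
  refine ⟨hpoint, hrb, fun A hA B hB hAB => ?_⟩
  have heq : ∑ C ∈ F.erase A, 2 * (C ∩ A).card = ∑ C ∈ F.erase A, δ := by
    have h2 := hsum A hA
    rw [← Finset.mul_sum, sum_const, smul_eq_mul, card_erase_of_mem hA]
    obtain ⟨b, hb'⟩ : ∃ b, F.card = b + 1 := ⟨F.card - 1, by omega⟩
    rw [hb', Nat.add_sub_cancel]
    have : 2 * r = b + 2 := by omega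
    nlinarith
  have := (Finset.sum_eq_sum_iff_of_le (hle A hA)).1 heq B (mem_erase.2 ⟨hAB.symm, hB⟩)
  rwa [inter_comm]

/-- If any two points lie in `l` common blocks and any two blocks meet in `δ / 2` points, counting
pairs of points, globally and within one block, forces `2 * δ = n + 1`. -/
lemma two_mul_eq_of_design {l : ℕ} (hn : n < 2 * δ) (hδn : δ < n) (hF : F.Nonempty)
    (hcard : ∀ A ∈ F, A.card = δ) (hrn : F.card * δ = r * n) (hrb : 2 * r = F.card + 1)
    (hint : ∀ A ∈ F, ∀ B ∈ F, A ≠ B → 2 * (A ∩ B).card = δ)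
    (hl : ∀ i j, i ≠ j → (F.filter (fun A => i ∈ A ∧ j ∈ A)).card = l) :
    2 * δ = n + 1 := by
  have hoff : ∀ X : Finset (Fin n), (X.offDiag.card : ℤ) = X.card * (X.card - 1) := by
    intro X
    rw [Finset.offDiag_card, Nat.cast_sub (Nat.le_mul_self _)]
    push_cast; ring
  have hpair : (F.card : ℤ) * (δ * (δ - 1)) = n * (n - 1) * l := by
    have h := congrArg (Nat.cast : ℕ → ℤ) (sum_card_offDiag_eq F l hl univ)
    push_cast [hoff] at h
    rw [Finset.sum_congr rfl (g := fun _ => (δ * (δ - 1) : ℤ))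
      (fun A hA => by simp [hcard A hA])] at h
    simpa using h
  -- The factor 4 clears the denominators of `(δ / 2) (δ / 2 - 1)`.
  have hblock : (4 * (δ * (δ - 1)) + (F.card - 1) * (δ * (δ - 2)) : ℤ) = 4 * (δ * (δ - 1)) * l := by
    obtain ⟨A, hA⟩ := hF
    have h := congrArg (Nat.cast : ℕ → ℤ) (sum_card_offDiag_eq F l hl A)
    rw [← Finset.add_sum_erase F _ hA, inter_self] at h
    push_cast [hoff, hcard A hA] at h
    have h4 : (4 : ℤ) * ∑ B ∈ F.erase A, ((B ∩ A).card : ℤ) * ((B ∩ A).card - 1)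
        = (F.card - 1) * (δ * (δ - 2)) := by
      rw [Finset.mul_sum, Finset.sum_congr rfl (g := fun _ => (δ * (δ - 2) : ℤ)), sum_const,
        card_erase_of_mem hA, nsmul_eq_mul, Nat.cast_sub (card_pos.2 ⟨A, hA⟩)]
      · simp
      · intro B hB
        have := hint B (mem_of_mem_erase hB) A hA (ne_of_mem_erase hB)
        have h2 : (2 : ℤ) * (B ∩ A).card = δ := by exact_mod_cast this
        rw [← h2]; ring
    linarith
  have hrn' : (F.card : ℤ) * δ = r * n := by exact_mod_cast hrn
  have hrb' : (F.card : ℤ) = 2 * r - 1 := by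
    have : (2 * r : ℤ) = F.card + 1 := by exact_mod_cast hrb
    linarith
  have hr1 : r ≠ 1 := by
    rintro rfl
    have : F.card = 1 := by omega
    rw [this] at hrn
    omega
  have hr0 : r ≠ 0 := by omega
  rw [hrb'] at hrn' hpair hblock
  -- With `m = 2 δ - n` the parameters become `δ = r m` and `n = (2 r - 1) m`.
  obtain ⟨m, hm⟩ : ∃ m : ℤ, m = 2 * δ - n := ⟨_, rfl⟩
  have hm0 : m ≠ 0 := by omega
  have hδm : (δ : ℤ) = r * m := by rw [hm]; linarith
  have hnm : (n : ℤ) = (2 * r - 1) * m := by linarith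
  have hn0 : (n : ℤ) ≠ 0 := by omega
  have hδ0 : (δ : ℤ) ≠ 0 := by omega
  have hp : (r : ℤ) * (δ - 1) = (n - 1) * l := by
    apply mul_left_cancel₀ hn0
    linear_combination hpair - (δ - 1) * hrn'
  have hb : ((r : ℤ) - 1) * (δ - 2) = 2 * (δ - 1) * (l - 1) := by
    apply mul_left_cancel₀ (mul_ne_zero two_ne_zero hδ0)
    linear_combination hblock
  have hfin : (r : ℤ) * (((r : ℤ) - 1) * (m * (m - 1))) = 0 := by
    rw [hδm] at hp hb
    rw [hnm] at hp
    linear_combination ((2 * r - 1) * m - 1) * hb - 2 * (r * m - 1) * hp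
  have hr0' : (r : ℤ) ≠ 0 := by exact_mod_cast hr0
  have hr1' : (r : ℤ) - 1 ≠ 0 := by omega
  have : m - 1 = 0 := by
    simpa [hr0, hr1', hm0] using hfin
  omega

end Design

/-! ### Codewords and their supports -/

section Code

variable {n : ℕ}

/-- The characteristic vector of a set of coordinates. -/
def chi (A : Finset (Fin n)) : V n := fun i => if i ∈ A then 1 else 0

@[simp] lemma supp_chi (A : Finset (Fin n)) : supp (chi A) = A := by
  ext i; simp [supp, chi]

@[simp] lemma chi_supp (x : V n) : chi (supp x) = x := by
  have key : ∀ a : ZMod 2, (if a ≠ 0 then (1 : ZMod 2) else 0) = a := by decide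
  funext i
  simpa [supp, chi] using key (x i)

@[simp] lemma supp_zero : supp (0 : V n) = ∅ := by simp [supp]

lemma hammingDist_add_inter (x y : V n) :
    hammingDist x y + 2 * (supp x ∩ supp y).card = (supp x).card + (supp y).card := by
  have key : ∀ a b : ZMod 2, a ≠ b ↔ (a ≠ 0 ∧ ¬ b ≠ 0) ∨ (b ≠ 0 ∧ ¬ a ≠ 0) := by decide
  have h : hammingDist x y = (supp x \ supp y ∪ supp y \ supp x).card := by
    unfold hammingDist
    congr 1
    ext i
    simpa [supp] using key (x i) (y i)
  rw [h, card_union_of_disjoint (disjoint_sdiff_sdiff)]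
  have h1 := card_sdiff_add_card_inter (supp x) (supp y)
  have h2 := card_sdiff_add_card_inter (supp y) (supp x)
  rw [inter_comm] at h2
  omega

variable {δ : ℕ} {C : Set (V n)}

lemma le_card_supp (h0 : (0 : V n) ∈ C) (hmin : IsMinDist C δ) {β : V n} (hβ : β ∈ C)
    (hβ0 : β ≠ 0) : δ ≤ (supp β).card := by
  have := hmin.1 0 h0 β hβ hβ0.symm
  have h := hammingDist_add_inter 0 β
  simp at h
  simpa [h] using this

/-- As `2 * A.card ≤ δ`, the codeword `0` is a nearest codeword to the characteristic vector of `A`. -/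
lemma distTo_chi (h0 : (0 : V n) ∈ C) (hmin : IsMinDist C δ) {A : Finset (Fin n)}
    (hA : 2 * A.card ≤ δ) : distTo C (chi A) = A.card := by
  have hz : hammingDist (chi A) 0 = A.card := by
    simpa using hammingDist_add_inter (chi A) 0
  refine le_antisymm (Nat.sInf_le ⟨0, h0, hz⟩) (le_csInf ⟨_, 0, h0, hz⟩ ?_)
  rintro _ ⟨β, hβ, rfl⟩
  by_cases hβ0 : β = 0
  · rw [hβ0, hz]
  have h1 := le_card_supp h0 hmin hβ hβ0
  have h2 := hammingDist_add_inter (chi A) β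
  have h3 : (supp (chi A) ∩ supp β).card ≤ A.card := by
    rw [supp_chi]; exact card_le_card inter_subset_left
  rw [supp_chi] at h2 h3
  omega

open Classical in
/-- The supports of the codewords of weight `k`. -/
noncomputable def blocks (C : Set (V n)) (k : ℕ) : Finset (Finset (Fin n)) :=
  univ.filter (fun A => A.card = k ∧ chi A ∈ C)

lemma mem_blocks {k : ℕ} {A : Finset (Fin n)} : A ∈ blocks C k ↔ A.card = k ∧ chi A ∈ C := by
  simp [blocks]

/-- Apart from possibly `0`, the codewords at distance `δ - A.card` from the characteristic vector
of `A` are those of weight `δ` whose support contains `A`. -/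
lemma card_filter_superset (h0 : (0 : V n) ∈ C) (hmin : IsMinDist C δ) (hδ : 0 < δ)
    {A : Finset (Fin n)} (hA : 2 * A.card ≤ δ) :
    ((blocks C δ).filter (fun B => A ⊆ B)).card + (if A.card = δ - A.card then 1 else 0)
      = {β ∈ C | hammingDist (chi A) β = δ - A.card}.ncard := by
  have hz : hammingDist (chi A) 0 = A.card := by
    simpa using hammingDist_add_inter (chi A) 0
  have hset : {β ∈ C | hammingDist (chi A) β = δ - A.card} \ {0}
      = chi '' ((blocks C δ).filter (fun B => A ⊆ B) : Finset (Finset (Fin n))) := by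
    ext β
    simp only [Set.mem_sdiff, Set.mem_ofPred_eq, Set.mem_singleton_iff, Set.mem_image,
      mem_coe, mem_filter, mem_blocks]
    have h2 := hammingDist_add_inter (chi A) β
    rw [supp_chi] at h2
    have h3 : (A ∩ supp β).card ≤ A.card := card_le_card inter_subset_left
    constructor
    · rintro ⟨⟨hβ, hd⟩, hβ0⟩
      have h1 := le_card_supp h0 hmin hβ hβ0
      refine ⟨supp β, ⟨⟨by omega, by simpa using hβ⟩, ?_⟩, chi_supp β⟩
      exact inter_eq_left.1 (eq_of_subset_of_card_le inter_subset_left (by omega))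
    · rintro ⟨B, ⟨⟨hB, hBC⟩, hAB⟩, rfl⟩
      rw [supp_chi, inter_eq_left.2 hAB] at h2
      refine ⟨⟨hBC, by omega⟩, fun hB0 => ?_⟩
      have := congrArg (fun x => (supp x).card) hB0
      simp [hB] at this
      omega
  have hinj : Function.Injective (chi (n := n)) := fun X Y h => by
    rw [← supp_chi X, h, supp_chi]
  have hcard := congrArg Set.ncard hset
  rw [Set.ncard_image_of_injective _ hinj, Set.ncard_coe_finset] at hcard
  rw [← hcard]
  split_ifs with hc
  · exact Set.ncard_sdiff_singleton_add_one ⟨h0, by rw [hz]; exact hc⟩ (Set.toFinite _)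
  · rw [Set.sdiff_singleton_eq_self (fun h => hc (hz.symm.trans h.2)), add_zero]

/-- For every `t ≤ δ / 2`, the supports of the codewords of weight `δ` form a `t`-design. -/
lemma card_filter_superset_eq (hcr : CompletelyRegular C) (h0 : (0 : V n) ∈ C)
    (hmin : IsMinDist C δ) (hδ : 0 < δ) {A B : Finset (Fin n)} (hA : 2 * A.card ≤ δ)
    (hAB : A.card = B.card) :
    ((blocks C δ).filter (fun X => A ⊆ X)).card = ((blocks C δ).filter (fun X => B ⊆ X)).card := by
  have h1 := card_filter_superset h0 hmin hδ hA
  have h2 := card_filter_superset h0 hmin hδ (A := B) (by omega)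
  have h3 := hcr A.card (δ - A.card) (chi A) (chi B) (distTo_chi h0 hmin hA)
    (by rw [distTo_chi h0 hmin (by omega), hAB])
  rw [← hAB] at h2
  omega

lemma blocks_nonempty (hcr : CompletelyRegular C) (h0 : (0 : V n) ∈ C) (hmin : IsMinDist C δ) :
    (blocks C δ).Nonempty := by
  obtain ⟨-, α, hα, β, hβ, -, hd⟩ := hmin
  have hz : ∀ γ ∈ C, distTo C γ = 0 := fun γ hγ =>
    Nat.le_zero.1 (Nat.sInf_le ⟨γ, hγ, hammingDist_self γ⟩)
  have h := hcr 0 δ α 0 (hz α hα) (hz 0 h0)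
  have hpos : 0 < {β ∈ C | hammingDist α β = δ}.ncard :=
    (Set.ncard_pos (Set.toFinite _)).2 ⟨β, hβ, hd⟩
  rw [h, Set.ncard_pos (Set.toFinite _)] at hpos
  obtain ⟨γ, hγ, hγd⟩ := hpos
  refine ⟨supp γ, mem_blocks.2 ⟨?_, by simpa using hγ⟩⟩
  have := hammingDist_add_inter 0 γ
  simp at this
  simpa [this] using hγd

lemma two_mul_inter_le (hmin : IsMinDist C δ) {A : Finset (Fin n)} (hA : A ∈ blocks C δ) {γ : V n}
    (hγ : γ ∈ C) (hne : supp γ ≠ A) : 2 * (A ∩ supp γ).card ≤ (supp γ).card := by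
  obtain ⟨hAδ, hAC⟩ := mem_blocks.1 hA
  have h1 := hmin.1 (chi A) hAC γ hγ (fun h => hne (by rw [← h, supp_chi]))
  have h2 := hammingDist_add_inter (chi A) γ
  rw [supp_chi] at h2
  omega

end Code

/-- A completely regular code with `|C| > 1`, `0 ∈ C` and `max(2, n/2) < δ < n` has `δ`
even, and the supports of any two distinct nonzero codewords meet in `(n+1)/4` points. -/
theorem stmt_8 {n δ : ℕ} (C : Set (V n)) (hcr : CompletelyRegular C)
    (hcard : 1 < C.ncard) (h0 : (0 : V n) ∈ C) (hmin : IsMinDist C δ)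
    (hδ2 : 2 < δ) (hlow : n < 2 * δ) (hhigh : δ < n) :
    Even δ ∧ ∀ α ∈ C, ∀ β ∈ C, α ≠ β → α ≠ 0 → β ≠ 0 →
      4 * (supp α ∩ supp β).card = n + 1 := by
  have hδ : 0 < δ := by omega
  have hne := blocks_nonempty hcr h0 hmin
  have hcd : ∀ A ∈ blocks C δ, A.card = δ := fun A hA => (mem_blocks.1 hA).1
  obtain ⟨r, hr⟩ : ∃ r, ∀ i, ((blocks C δ).filter (fun A => i ∈ A)).card = r := by
    refine ⟨((blocks C δ).filter (fun A => ⟨0, by omega⟩ ∈ A)).card, fun i => ?_⟩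
    have h := card_filter_superset_eq hcr h0 hmin hδ (A := {i}) (B := {⟨0, by omega⟩})
      (by rw [card_singleton]; omega) rfl
    simpa only [singleton_subset_iff] using h
  have hle : ∀ A ∈ blocks C δ, ∀ B ∈ blocks C δ, A ≠ B → 2 * (A ∩ B).card ≤ δ := by
    intro A hA B hB hAB
    have h := two_mul_inter_le hmin hA (mem_blocks.1 hB).2 (by rw [supp_chi]; exact hAB.symm)
    rwa [supp_chi, hcd B hB] at h
  obtain ⟨hrn, hrb, hint⟩ := design_two_mul_rep hlow hne hcd hle hr
  have heven : Even δ := by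
    have h1 : 1 < (blocks C δ).card := by
      have := hne.card_pos
      by_contra! hc
      have hb : (blocks C δ).card = 1 := by omega
      have hr1 : r = 1 := by omega
      rw [hb, hr1] at hrn
      omega
    obtain ⟨A, hA, B, hB, hAB⟩ := one_lt_card.1 h1
    exact (hint A hA B hB hAB) ▸ even_two_mul _
  obtain ⟨l, hl⟩ : ∃ l, ∀ i j, i ≠ j →
      ((blocks C δ).filter (fun A => i ∈ A ∧ j ∈ A)).card = l := by
    have h01 : (⟨0, by omega⟩ : Fin n) ≠ ⟨1, by omega⟩ := by simp
    refine ⟨((blocks C δ).filter (fun A => ⟨0, by omega⟩ ∈ A ∧ ⟨1, by omega⟩ ∈ A)).card,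
      fun i j hij => ?_⟩
    have h := card_filter_superset_eq hcr h0 hmin hδ (A := {i, j})
      (B := {⟨0, by omega⟩, ⟨1, by omega⟩})
      (by rw [card_pair hij]; obtain ⟨k, hk⟩ := heven; omega)
      (by rw [card_pair hij, card_pair h01])
    simpa only [insert_subset_iff, singleton_subset_iff] using h
  have h2δ := two_mul_eq_of_design hlow hhigh hne hcd hrn hrb hint hl
  have hall : ∀ γ ∈ C, γ ≠ 0 → supp γ ∈ blocks C δ := by
    intro γ hγ hγ0
    by_contra hc
    have h1 : ∀ A ∈ blocks C δ, 2 * (A ∩ supp γ).card ≤ (supp γ).card := fun A hA =>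
      two_mul_inter_le hmin hA hγ (fun h => hc (h ▸ hA))
    have h2 := Finset.sum_le_sum h1
    rw [← Finset.mul_sum, sum_card_inter_eq _ r hr, sum_const, smul_eq_mul] at h2
    have h3 := le_card_supp h0 hmin hγ hγ0
    -- Cancelling the weight of `γ` leaves `2 r ≤ b`, against `2 r = b + 1`.
    have h4 : (supp γ).card * (2 * r) ≤ (supp γ).card * (blocks C δ).card := by linarith
    have := Nat.le_of_mul_le_mul_left h4 (by omega)
    omega
  refine ⟨heven, fun α hα β hβ hαβ hα0 hβ0 => ?_⟩
  have := hint _ (hall α hα hα0) _ (hall β hβ hβ0)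
    (fun h => hαβ (by rw [← chi_supp α, h, chi_supp]))
  omega
end
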